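/- arXiv:2304.13735 — 2 statements merged into one kernel-verified Lean document; each statement's English description precedes it below -/
import Mathlib

section
/- Let $p$ be a prime, $q$ a power of $p$ (with positive exponent) and $d\ge 1$ an integer. Write $\bar a=a^q$ for $a\in\mathbb F_{q^2}$, and let $\bar f$ be obtained from $f\in\mathbb F_{q^2}[t]$ by applying $a\mapsto\bar a$ to the coefficients. For $f\in\mathbb F_{q^2}[t]$ with $f(0)\ne 0$ put $\tilde f(t)=\overline{f(0)}^{\,-1}\,t^{\deg f}\,\bar f(t^{-1})$, and call $f$ a SCIM (self-conjugate irreducible monic) polynomial if it is monic and irreducible over $\mathbb F_{q^2}$, $f(0)\neq 0$ and $\tilde f=f$. (i) If $f$ is a SCIM polynomial of degree $d$ over $\mathbb F_{q^2}$, then every root $\alpha$ of $f$ (in an algebraic closure of $\mathbb F_{q^2}$) satisfies $\alpha^{q^d+1}=1$. (ii) Conversely, suppose that $d$ is odd. If $\alpha\in\mathbb F_{q^{2d}}$ satisfies $\alpha^{q^d+1}=1$ and $\mathbb F_{q^2}(\alpha)=\mathbb F_{q^{2d}}$, then the minimal polynomial of $\alpha$ over $\mathbb F_{q^2}$ is a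 SCIM polynomial of degree $d$. -/
open Polynomial

/-- `f̃(t) = conj(f(0))⁻¹ · t^(deg f) · f̄(1/t)`, where `f̄` is `f` with the conjugation `σ`
applied coefficientwise. -/
noncomputable def tildePoly {F : Type*} [Field F] (σ : F →+* F) (f : F[X]) : F[X] :=
  Polynomial.C (σ (f.coeff 0))⁻¹ * (f.map σ).reverse

/-- A self-conjugate irreducible monic (SCIM) polynomial: a monic irreducible polynomial `f`
with `f(0) ≠ 0` and `f̃ = f`. -/
def IsSCIM {F : Type*} [Field F] (σ : F →+* F) (f : F[X]) : Prop :=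
  f.Monic ∧ Irreducible f ∧ f.coeff 0 ≠ 0 ∧ tildePoly σ f = f

/-!
Let `ρ x = (x ^ q)⁻¹`, so that `ρ ∘ ρ` is the Frobenius `x ↦ x ^ q ^ 2` of extensions of `𝔽_{q²}`.
If `α` is a root of `f` then `ρ α` is a root of `f̃`; hence the minimal polynomial of `α` is SCIM
exactly when `ρ α` is a conjugate of `α`, that is, lies in the orbit of `α` under `ρ ∘ ρ`. As `ρ`
is injective, this means that the period of `α` under `ρ` is odd. That period is then also the
period under `ρ ∘ ρ`, i.e. the degree of `α`, and for odd `n` the equation `ρ^[n] α = α` reads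
`α ^ (q ^ n + 1) = 1`.
-/

open Function
open scoped IntermediateField

section Iterate

variable {X : Type*} {g : X → X} {x : X}

theorem exists_iterate_iterate_two_eq_iff_odd_minimalPeriod (hg : Injective g) :
    (∃ k, (g^[2])^[k] x = g x) ↔ Odd (minimalPeriod g x) := by
  simp only [← iterate_mul]
  constructor
  · rintro ⟨k, hk⟩
    rcases k with _ | k
    · rw [minimalPeriod_eq_one_iff_isFixedPt.mpr hk.symm]
      exact odd_one
    · have hper : IsPeriodicPt g (2 * k + 1) x := hg <| by
        rwa [← iterate_succ_apply' g (2 * k + 1)]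
      exact (odd_two_mul_add_one k).of_dvd_nat hper.minimalPeriod_dvd
  · rintro ⟨m, hm⟩
    refine ⟨m + 1, ?_⟩
    rw [mul_add, mul_one, iterate_succ_apply' g (2 * m + 1), ← hm, iterate_minimalPeriod]

theorem minimalPeriod_iterate_two_of_odd (h : Odd (minimalPeriod g x)) :
    minimalPeriod g^[2] x = minimalPeriod g x := by
  rw [minimalPeriod_iterate_eq_div_gcd two_ne_zero, h.coprime_two_right.gcd_eq_one, Nat.div_one]

end Iterate

section InvPow

theorem iterate_two_inv_pow {G : Type*} [DivisionMonoid G] (q : ℕ) :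
    (fun x : G ↦ (x ^ q)⁻¹)^[2] = (· ^ q ^ 2) := by
  ext x
  simp only [iterate_succ, iterate_zero, comp_apply, id_eq, inv_pow, inv_inv, ← pow_mul, sq]

theorem iterate_inv_pow_of_odd {G : Type*} [DivisionMonoid G] (q : ℕ) {n : ℕ} (hn : Odd n)
    (x : G) : (fun x : G ↦ (x ^ q)⁻¹)^[n] x = (x ^ q ^ n)⁻¹ := by
  obtain ⟨m, rfl⟩ := hn
  rw [iterate_add_apply, iterate_one, iterate_mul, iterate_two_inv_pow, pow_iterate]
  simp only [inv_pow, ← pow_mul, ← pow_succ']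

theorem isPeriodicPt_inv_pow_iff_of_odd {G₀ : Type*} [GroupWithZero G₀] {q n : ℕ} (hn : Odd n)
    {x : G₀} (hx : x ≠ 0) :
    IsPeriodicPt (fun x : G₀ ↦ (x ^ q)⁻¹) n x ↔ x ^ (q ^ n + 1) = 1 := by
  rw [IsPeriodicPt, IsFixedPt, iterate_inv_pow_of_odd q hn, pow_succ,
    mul_eq_one_iff_inv_eq₀ (pow_ne_zero _ hx)]

end InvPow

section Frobenius

variable {F L : Type*} [Field F] [Fintype F] [Field L] [Algebra F L]

theorem minimalPeriod_pow_card_eq_natDegree_minpoly {α : L} (hα : IsIntegral F α) :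
    minimalPeriod (· ^ Fintype.card F) α = (minpoly F α).natDegree := by
  refine Nat.dvd_right_iff_eq.mp fun n ↦ ?_
  rw [← isPeriodicPt_iff_minimalPeriod_dvd, IsPeriodicPt, IsFixedPt, pow_iterate,
    (minpoly.irreducible hα).natDegree_dvd_iff_dvd_X_pow_card_pow_sub_X, minpoly.dvd_iff,
    Nat.card_eq_fintype_card]
  simp only [map_sub, map_pow, aeval_X, sub_eq_zero]

theorem isConjRoot_iff_exists_iterate_pow_card {α β : L} (hα : IsIntegral F α) :
    IsConjRoot F α β ↔ ∃ k, (· ^ Fintype.card F)^[k] α = β := by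
  constructor
  · intro h
    let M := F⟮α, β⟯
    have : FiniteDimensional F M :=
      IntermediateField.finiteDimensional_adjoin_pair hα (h.isIntegral hα)
    have : Finite M := Module.finite_of_finite F
    let a : M := ⟨α, IntermediateField.subset_adjoin F _ (by simp)⟩
    let b : M := ⟨β, IntermediateField.subset_adjoin F _ (by simp)⟩
    have hab : IsConjRoot F b a := ((isConjRoot_algHom_iff (x := a) (y := b) M.val).mp h).symm
    obtain ⟨e, he⟩ := hab.exists_algEquiv
    obtain ⟨k, hk⟩ := (FiniteField.bijective_frobeniusAlgEquivOfAlgebraic_pow F M).2 e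
    have hiter : a ^ Fintype.card F ^ (k : ℕ) = b := by
      rw [← he, ← hk, AlgEquiv.coe_pow, FiniteField.coe_frobeniusAlgEquivOfAlgebraic_iterate]
    refine ⟨k, ?_⟩
    rw [pow_iterate]
    exact congrArg M.val hiter
  · rintro ⟨k, rfl⟩
    refine isConjRoot_of_aeval_eq_zero hα ?_
    rw [← FiniteField.coe_frobeniusAlgHom, ← AlgHom.coe_pow, aeval_algHom_apply, minpoly.aeval,
      map_zero]

theorem exists_ringHom_apply_eq_pow (R : Type*) [CommRing R] [Nontrivial R] [Algebra F R]
    {q n : ℕ} (hn : n ≠ 0) (hF : Fintype.card F = q ^ n) : ∃ τ : R →+* R, ∀ x, τ x = x ^ q := by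
  obtain ⟨p, _, m, hp, hcard⟩ := FiniteField.card' F
  have : CharP R p := charP_of_injective_algebraMap' F p
  have : ExpChar R p := .prime hp
  obtain ⟨ℓ, -, rfl⟩ := (Nat.dvd_prime_pow hp).mp (hcard ▸ hF ▸ dvd_pow_self q hn)
  exact ⟨iterateFrobenius R p ℓ, iterateFrobenius_def p ℓ⟩

theorem finrank_eq_of_card_eq_pow {V : Type*} [Fintype V] [AddCommGroup V] [Module F V]
    {d : ℕ} (h : Fintype.card V = Fintype.card F ^ d) : Module.finrank F V = d :=
  Nat.pow_right_injective Fintype.one_lt_card (Module.card_eq_pow_finrank.symm.trans h)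

end Frobenius

section TildePoly

variable {F : Type*} [Field F] {σ : F →+* F} {f : F[X]}

theorem natTrailingDegree_map_eq_zero_of_coeff_zero_ne_zero (hf : f.coeff 0 ≠ 0) :
    (f.map σ).natTrailingDegree = 0 := by
  rw [natTrailingDegree_eq_zero, coeff_map]
  exact .inr ((map_ne_zero σ).mpr hf)

theorem natDegree_tildePoly (hf : f.coeff 0 ≠ 0) : (tildePoly σ f).natDegree = f.natDegree := by
  rw [tildePoly, natDegree_C_mul (inv_ne_zero ((map_ne_zero σ).mpr hf)), reverse_natDegree,
    natTrailingDegree_map_eq_zero_of_coeff_zero_ne_zero hf, natDegree_map, Nat.sub_zero]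

theorem monic_tildePoly (hf : f.coeff 0 ≠ 0) : (tildePoly σ f).Monic := by
  rw [Monic, tildePoly, leadingCoeff_mul, leadingCoeff_C, reverse_leadingCoeff, trailingCoeff,
    natTrailingDegree_map_eq_zero_of_coeff_zero_ne_zero hf, coeff_map,
    inv_mul_cancel₀ ((map_ne_zero σ).mpr hf)]

variable {L : Type*} [Field L] [Algebra F L] {τ : L →+* L} {α : L}

theorem aeval_inv_tildePoly_eq_zero
    (hτ : τ.comp (algebraMap F L) = (algebraMap F L).comp σ) (hα : α ≠ 0)
    (h : aeval α f = 0) : aeval (τ α)⁻¹ (tildePoly σ f) = 0 := by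
  have hconj : eval₂ (algebraMap F L) (τ α) (f.map σ) = 0 := by
    rw [eval₂_map, ← hτ, ← hom_eval₂, ← aeval_def, h, map_zero]
  let _ : Invertible (τ α) := invertibleOfNonzero ((map_ne_zero τ).mpr hα)
  have hreverse : eval₂ (algebraMap F L) (τ α)⁻¹ (f.map σ).reverse = 0 := by
    rwa [← invOf_eq_inv, eval₂_reverse_eq_zero_iff]
  rw [tildePoly, map_mul, aeval_def _ (reverse _), hreverse, mul_zero]

theorem isSCIM_minpoly_iff_isConjRoot
    (hτ : τ.comp (algebraMap F L) = (algebraMap F L).comp σ) (hint : IsIntegral F α)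
    (hα : α ≠ 0) : IsSCIM σ (minpoly F α) ↔ IsConjRoot F α (τ α)⁻¹ := by
  have htilde := aeval_inv_tildePoly_eq_zero hτ hα (minpoly.aeval F α)
  have h0 := minpoly.coeff_zero_ne_zero hint hα
  refine ⟨fun h ↦ isConjRoot_of_aeval_eq_zero hint (h.2.2.2 ▸ htilde), fun h ↦ ?_⟩
  have hdvd : minpoly F α ∣ tildePoly σ (minpoly F α) := by
    rw [isConjRoot_def.mp h] at htilde ⊢
    exact minpoly.dvd F _ htilde
  exact ⟨minpoly.monic hint, minpoly.irreducible hint, h0,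
    eq_of_monic_of_dvd_of_natDegree_le (minpoly.monic hint) (monic_tildePoly h0) hdvd
      (natDegree_tildePoly h0).le⟩

end TildePoly

section SCIM

variable {F : Type*} [Field F] [Fintype F] {q : ℕ} {σ : F →+* F}
  {L : Type*} [Field L] [Algebra F L] {α : L}

theorem isSCIM_minpoly_iff_odd_minimalPeriod (hF : Fintype.card F = q ^ 2)
    (hσ : ∀ x, σ x = x ^ q) (hint : IsIntegral F α) (hα : α ≠ 0) :
    IsSCIM σ (minpoly F α) ↔ Odd (minimalPeriod (fun x : L ↦ (x ^ q)⁻¹) α) := by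
  obtain ⟨τ, hτ⟩ := exists_ringHom_apply_eq_pow L two_ne_zero hF
  have hcomp : τ.comp (algebraMap F L) = (algebraMap F L).comp σ := by
    ext x
    simp only [RingHom.comp_apply, hτ, hσ, map_pow]
  have hinj : Injective fun x : L ↦ (x ^ q)⁻¹ := by
    simpa only [comp_def, hτ] using inv_injective.comp τ.injective
  rw [isSCIM_minpoly_iff_isConjRoot hcomp hint hα, isConjRoot_iff_exists_iterate_pow_card hint,
    ← exists_iterate_iterate_two_eq_iff_odd_minimalPeriod hinj, iterate_two_inv_pow, hF, hτ]

theorem IsSCIM.odd_natDegree_and_pow_eq_one (hF : Fintype.card F = q ^ 2)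
    (hσ : ∀ x, σ x = x ^ q) {f : F[X]} (hf : IsSCIM σ f) (hroot : aeval α f = 0) :
    Odd f.natDegree ∧ α ^ (q ^ f.natDegree + 1) = 1 := by
  obtain ⟨hmonic, hirr, h0, -⟩ := id hf
  obtain rfl := minpoly.eq_of_irreducible_of_monic hirr hroot hmonic
  have hint : IsIntegral F α := ⟨_, hmonic, hroot⟩
  have hα : α ≠ 0 := by
    rintro rfl
    simp at h0
  have hodd := (isSCIM_minpoly_iff_odd_minimalPeriod hF hσ hint hα).mp hf
  have hdeg : minimalPeriod (fun x : L ↦ (x ^ q)⁻¹) α = (minpoly F α).natDegree := by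
    rw [← minimalPeriod_iterate_two_of_odd hodd, iterate_two_inv_pow, ← hF,
      minimalPeriod_pow_card_eq_natDegree_minpoly hint]
  rw [← hdeg]
  exact ⟨hodd, (isPeriodicPt_inv_pow_iff_of_odd hodd hα).mp (isPeriodicPt_minimalPeriod _ _)⟩

theorem isSCIM_minpoly_of_pow_eq_one (hF : Fintype.card F = q ^ 2) (hσ : ∀ x, σ x = x ^ q)
    {d : ℕ} (hd : Odd d) (hα : α ^ (q ^ d + 1) = 1) : IsSCIM σ (minpoly F α) := by
  have hα0 : α ≠ 0 := by
    rintro rfl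
    simp at hα
  have hint : IsIntegral F α := .of_pow (Nat.succ_pos _) (hα ▸ isIntegral_one)
  have hper := (isPeriodicPt_inv_pow_iff_of_odd hd hα0).mpr hα
  exact (isSCIM_minpoly_iff_odd_minimalPeriod hF hσ hint hα0).mpr
    (hd.of_dvd_nat hper.minimalPeriod_dvd)

end SCIM

theorem statement3_general {F : Type*} [Field F] [Fintype F] {q : ℕ}
    (hF : Fintype.card F = q ^ 2) {σ : F →+* F} (hσ : ∀ x, σ x = x ^ q)
    {L : Type*} [Field L] [Algebra F L] (α : L) :
    (∀ f : F[X], IsSCIM σ f → aeval α f = 0 →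
      Odd f.natDegree ∧ α ^ (q ^ f.natDegree + 1) = 1) ∧
    (∀ d, Odd d → α ^ (q ^ d + 1) = 1 → IsSCIM σ (minpoly F α)) :=
  ⟨fun _ hf ↦ hf.odd_natDegree_and_pow_eq_one hF hσ,
    fun _ ↦ isSCIM_minpoly_of_pow_eq_one hF hσ⟩

theorem statement3 (p ℓ q : ℕ) (hp : p.Prime) (hℓ : 0 < ℓ) (hq : q = p ^ ℓ)
    {F : Type*} [Field F] [Fintype F] (hF : Fintype.card F = q ^ 2)
    (σ : F →+* F) (hσ : ∀ x : F, σ x = x ^ q) (d : ℕ) (hd : 1 ≤ d)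
    {K : Type*} [Field K] [Algebra F K] [IsAlgClosure F K]
    {E : Type*} [Field E] [Fintype E] (hE : Fintype.card E = q ^ (2 * d))
    [Algebra F E] :
    (∀ f : F[X], IsSCIM σ f → f.natDegree = d →
      ∀ α : K, Polynomial.aeval α f = 0 → α ^ (q ^ d + 1) = 1) ∧
    (Odd d → ∀ α : E, α ^ (q ^ d + 1) = 1 → IntermediateField.adjoin F {α} = ⊤ →
      IsSCIM σ (minpoly F α) ∧ (minpoly F α).natDegree = d) := by
  refine ⟨?_, fun hodd α hα hgen ↦ ⟨(statement3_general hF hσ α).2 d hodd hα, ?_⟩⟩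
  · rintro f hf rfl α hα
    exact ((statement3_general hF hσ α).1 f hf hα).2
  · rw [(Field.primitive_element_iff_minpoly_natDegree_eq F α).mp hgen]
    exact finrank_eq_of_card_eq_pow (by rw [hE, hF, pow_mul])
end

section
/- Let $q$ be a prime power and let $f(x)$ be an irreducible polynomial of degree $n$ over the finite field $\mathbb{F}_q$ with $f(0)\neq 0$, whose roots (in an algebraic closure of $\mathbb{F}_q$) have multiplicative order $t$. For a positive integer $s$ coprime to $q$ let $\mathcal{M}(s,q)$ denote the multiplicative order of $q$ modulo $s$, i.e. the least integer $k\ge 1$ with $q^{k}\equiv 1 \pmod s$, and let $\varphi$ be Euler's totient function. Let $m$ be a natural number with $\gcd(m,q)=1$, and write $m=m_1m_2$ where $\gcd(m_1,t)=1$ and every prime factor of $m_2$ divides $t$. Then: (1) each root of $f(x^m)$ has multiplicative order of the form $d\,m_2\,t$ with $d$ a divisor of $m_1$; (2) for each divisor $d$ of $m_1$, the polynomial $f(x^m)$ has, up to nonzero scalar multiples, exactly $n\,m_2\,\varphi(d)/\mathcal{M}(d m_2 t,q)$ irreducible factors over $\mathbb{F}_q$ whose roots have order $d\,m_2\,t$,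 and each such factor has degree $\mathcal{M}(d m_2 t,q)$. -/
open Polynomial

/-!
The set of roots of order `s` of a polynomial `g` over a field with `q` elements is the disjoint
union of the root sets of the irreducible factors of `g` of order `s`, each of which has degree
equal to the order of `q` modulo `s`. It thus suffices to count the roots of `f(x^m)` by their
order, and `f(x^(m₁m₂))` is reached from `f` in two substitutions.

If `m` is coprime to `t`, an element `a` of order `t` has a unique `m`-th root `a₀` of order `t`,
and the `m`-th roots of `a` of order `dt` are the `ζa₀` with `ζ` a primitive `d`-th root of unity.
If every prime factor of `m` divides `s`, all `m` of the `m`-th roots of an element of order `s`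
have order `ms`.
-/

section Order

variable {G : Type*} [Monoid G] {x : G}

theorem orderOf_eq_mul_orderOf_pow {m : ℕ} (hm : m ≠ 0)
    (hprime : ∀ r : ℕ, r.Prime → r ∣ m → r ∣ orderOf (x ^ m)) :
    orderOf x = m * orderOf (x ^ m) := by
  have hgcd : 0 < (orderOf x).gcd m := Nat.gcd_pos_of_pos_right _ (Nat.pos_of_ne_zero hm)
  have hcoprime : (orderOf (x ^ m)).Coprime (m / (orderOf x).gcd m) := by
    rw [orderOf_pow' x hm]
    exact Nat.coprime_div_gcd_div_gcd hgcd
  have hquot : m / (orderOf x).gcd m = 1 := by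
    by_contra hne
    obtain ⟨r, hr, hrdvd⟩ := Nat.exists_prime_and_dvd hne
    have hrm : r ∣ m := hrdvd.trans (Nat.div_dvd_of_dvd (Nat.gcd_dvd_right _ _))
    exact Nat.not_coprime_of_dvd_of_dvd hr.one_lt (hprime r hr hrm) hrdvd hcoprime
  have hdvd : m ∣ orderOf x :=
    Nat.gcd_eq_right_iff_dvd.mp (Nat.eq_of_dvd_of_div_eq_one (Nat.gcd_dvd_right _ _) hquot)
  rw [orderOf_pow_of_dvd hm hdvd, Nat.mul_div_cancel' hdvd]

theorem exists_dvd_orderOf_eq_mul_orderOf_pow {m : ℕ} (hm : m ≠ 0) :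
    ∃ d, d ∣ m ∧ orderOf x = d * orderOf (x ^ m) :=
  ⟨(orderOf x).gcd m, Nat.gcd_dvd_right _ _, by
    rw [orderOf_pow' x hm, Nat.mul_div_cancel' (Nat.gcd_dvd_left _ _)]⟩

theorem exists_dvd_orderOf_eq_of_orderOf_pow_mul {m₁ m₂ t : ℕ} (hm : m₁ * m₂ ≠ 0)
    (hx : orderOf (x ^ (m₁ * m₂)) = t) (hprime : ∀ r : ℕ, r.Prime → r ∣ m₂ → r ∣ t) :
    ∃ d, d ∣ m₁ ∧ orderOf x = d * m₂ * t := by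
  obtain ⟨d, hd, hxd⟩ :=
    exists_dvd_orderOf_eq_mul_orderOf_pow (x := x ^ m₂) (left_ne_zero_of_mul hm)
  rw [← pow_mul, mul_comm m₂, hx] at hxd
  refine ⟨d, hd, ?_⟩
  rw [orderOf_eq_mul_orderOf_pow (right_ne_zero_of_mul hm) fun r hr hrm =>
    hxd ▸ (hprime r hr hrm).mul_left d, hxd]
  ring

theorem orderOf_pow_eq_of_coprime_of_orderOf_eq_mul {m d t : ℕ} (hm : m ≠ 0) (hmt : m.Coprime t)
    (hd : d ∣ m) (hx : orderOf x = d * t) : orderOf (x ^ m) = t := by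
  have hgcd : (d * t).gcd m = d := by
    rw [hmt.symm.gcd_mul_right_cancel, Nat.gcd_eq_left hd]
  rw [orderOf_pow' x hm, hx, hgcd, Nat.mul_div_cancel_left t
    (Nat.pos_of_dvd_of_pos hd (Nat.pos_of_ne_zero hm))]

theorem exists_pow_eq_and_orderOf_eq_of_coprime {m : ℕ} (hm : m.Coprime (orderOf x)) :
    ∃ y, y ^ m = x ∧ orderOf y = orderOf x := by
  obtain ⟨k, hk⟩ := exists_pow_eq_self_of_coprime hm
  have hpow : (x ^ k) ^ m = x := by rw [← pow_mul, mul_comm, pow_mul, hk]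
  refine ⟨x ^ k, hpow, (orderOf_pow_dvd k).antisymm ?_⟩
  conv_lhs => rw [← hpow]
  exact orderOf_pow_dvd m

end Order

theorem ncard_eq_ncard_mul_of_ncard_fiber_eq {α β : Type*} {f : α → β} {s : Set α} {t : Set β}
    {k : ℕ} (hmaps : Set.MapsTo f s t) (hfiber : ∀ b ∈ t, {a ∈ s | f a = b}.ncard = k) :
    s.ncard = t.ncard * k := by
  rcases eq_or_ne k 0 with rfl | hk
  · rw [mul_zero]
    by_contra hs
    have hfin := Set.finite_of_ncard_ne_zero hs
    obtain ⟨a, ha⟩ := Set.nonempty_of_ncard_ne_zero hs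
    exact Set.ncard_ne_zero_of_mem (s := {a' ∈ s | f a' = f a}) ⟨ha, rfl⟩ (hfin.sep _)
      (hfiber (f a) (hmaps ha))
  · have hcard (b : t) : Nat.card {a : s // hmaps.restrict f s t a = b} = k := by
      rw [← hfiber b b.2, ← Nat.card_coe_set_eq]
      exact Nat.card_congr (((Equiv.refl s).subtypeEquiv fun _ => Subtype.ext_iff).trans
        (Equiv.subtypeSubtypeEquivSubtypeInter (· ∈ s) (f · = b)))
    have hequiv (b : t) : {a : s // hmaps.restrict f s t a = b} ≃ Fin k :=
      (Nat.equivFinOfCardPos (hcard b ▸ hk)).trans (finCongr (hcard b))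
    rw [← Nat.card_coe_set_eq, ← Nat.card_coe_set_eq, Nat.card_congr
      ((Equiv.sigmaFiberEquiv (hmaps.restrict f s t)).symm.trans
        (Equiv.sigmaEquivProdOfEquiv hequiv)),
      Nat.card_prod, Nat.card_fin]

section PowerRoots

variable {L : Type*} [Field L] [IsSepClosed L] {a : L} {m : ℕ}

theorem ncard_rootSet_eq_natDegree {K : Type*} [Field K] [Algebra K L] {f : K[X]}
    (hf : f.Separable) : (f.rootSet L).ncard = f.natDegree := by
  rw [← card_rootSet_eq_natDegree hf (IsSepClosed.splits_codomain (K := L) f hf),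
    ← Nat.card_eq_fintype_card, Nat.card_coe_set_eq]

theorem ncard_setOf_pow_eq (hm : (m : L) ≠ 0) (ha : a ≠ 0) : {b : L | b ^ m = a}.ncard = m := by
  have hm0 : 0 < m := Nat.pos_of_ne_zero fun h => hm (by simp [h])
  have hset : {b : L | b ^ m = a} = (X ^ m - C a).rootSet L := by
    ext b
    simp [mem_rootSet_of_ne (X_pow_sub_C_ne_zero hm0 a), sub_eq_zero]
  rw [hset, ncard_rootSet_eq_natDegree (separable_X_pow_sub_C a hm ha), natDegree_X_pow_sub_C]

theorem ncard_setOf_pow_eq_and_orderOf_eq (hm : (m : L) ≠ 0) (hpos : 0 < orderOf a)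
    (hcop : m.Coprime (orderOf a)) {d : ℕ} (hd : d ∣ m) :
    {b : L | b ^ m = a ∧ orderOf b = d * orderOf a}.ncard = d.totient := by
  have hdL : NeZero (d : L) := ⟨ne_zero_of_dvd_ne_zero hm (Nat.cast_dvd_cast hd)⟩
  have hd0 : 0 < d := Nat.pos_of_ne_zero hdL.of_neZero_natCast.out
  obtain ⟨ζ₀, hζ₀⟩ := HasEnoughRootsOfUnity.exists_primitiveRoot L d
  obtain ⟨a₀, ha₀, hord⟩ := exists_pow_eq_and_orderOf_eq_of_coprime hcop
  have ha₀0 : a₀ ≠ 0 := by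
    rintro rfl
    exact hpos.ne' (by simp [← hord])
  have hmul {ζ : L} (hζ : orderOf ζ ∣ m) : orderOf (ζ * a₀) = orderOf ζ * orderOf a := by
    rw [← hord] at hcop ⊢
    exact (Commute.all ζ a₀).orderOf_mul_eq_mul_orderOf_of_coprime (hcop.coprime_dvd_left hζ)
  have hset : {b : L | b ^ m = a ∧ orderOf b = d * orderOf a} =
      (· * a₀) '' (primitiveRoots d L : Set L) := by
    ext b
    simp only [Set.mem_ofPred_eq, Set.mem_image, Finset.mem_coe,
      mem_primitiveRoots hd0, IsPrimitiveRoot.iff_orderOf]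
    constructor
    · rintro ⟨hb, hbord⟩
      have hba : b / a₀ * a₀ = b := div_mul_cancel₀ b ha₀0
      have hζ : orderOf (b / a₀) ∣ m := orderOf_dvd_of_pow_eq_one (by
        rw [div_pow, hb, ← ha₀, div_self (pow_ne_zero m ha₀0)])
      refine ⟨b / a₀, Nat.eq_of_mul_eq_mul_right hpos ?_, hba⟩
      rw [← hmul hζ, hba, hbord]
    · rintro ⟨ζ, rfl, rfl⟩
      exact ⟨by rw [mul_pow, orderOf_dvd_iff_pow_eq_one.mp hd, ha₀, one_mul], hmul hd⟩
  rw [hset, Set.ncard_image_of_injective _ (mul_left_injective₀ ha₀0), Set.ncard_coe_finset,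
    hζ₀.card_primitiveRoots]

end PowerRoots

section RootsOfOrder

variable {K : Type*} [Field K]

/-- The set of roots in `L` of a polynomial `f` over `K` that have multiplicative order `s`. As a
root set, it is empty by convention for `f = 0`. -/
def rootsOfOrder (f : K[X]) (L : Type*) [Field L] [Algebra K L] (s : ℕ) : Set L :=
  {β | β ∈ f.rootSet L ∧ orderOf β = s}

/-- The set of irreducible factors of `f` over `K` all of whose roots in `L` have multiplicative
order `s`. Factors are taken monic, so that each class up to scalars is represented once. -/
def irreducibleFactorsOfOrder (f : K[X]) (L : Type*) [Field L] [Algebra K L] (s : ℕ) : Set K[X] :=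
  {h | h.Monic ∧ Irreducible h ∧ h ∣ f ∧ ∀ β : L, aeval β h = 0 → orderOf β = s}

variable {L : Type*} [Field L] [Algebra K L]

theorem comp_X_pow_eq_zero_iff {f : K[X]} {m : ℕ} (hm : m ≠ 0) : f.comp (X ^ m) = 0 ↔ f = 0 := by
  rw [← expand_eq_comp_X_pow, expand_eq_zero (Nat.pos_of_ne_zero hm)]

theorem mem_rootSet_comp_X_pow {f : K[X]} {m : ℕ} (hm : m ≠ 0) {b : L} :
    b ∈ (f.comp (X ^ m)).rootSet L ↔ b ^ m ∈ f.rootSet L := by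
  simp [mem_rootSet, aeval_comp, comp_X_pow_eq_zero_iff hm]

theorem ncard_rootsOfOrder_comp_X_pow_of_prime_dvd [IsSepClosed L] (f : K[X]) {m s : ℕ}
    (hm : (m : L) ≠ 0) (hs : 0 < s) (hprime : ∀ r : ℕ, r.Prime → r ∣ m → r ∣ s) :
    (rootsOfOrder (f.comp (X ^ m)) L (m * s)).ncard = (rootsOfOrder f L s).ncard * m := by
  have hm0 : m ≠ 0 := fun h => hm (by simp [h])
  refine ncard_eq_ncard_mul_of_ncard_fiber_eq (f := (· ^ m)) (fun b hb => ?_) fun a ha => ?_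
  · refine ⟨(mem_rootSet_comp_X_pow hm0).mp hb.1, ?_⟩
    rw [orderOf_pow_of_dvd hm0 (hb.2 ▸ Nat.dvd_mul_right m s), hb.2,
      Nat.mul_div_cancel_left s (Nat.pos_of_ne_zero hm0)]
  · obtain ⟨hroot, rfl⟩ := ha
    have ha0 : a ≠ 0 := by
      rintro rfl
      simp at hs
    refine Eq.trans (congrArg Set.ncard (Set.ext fun b => ?_)) (ncard_setOf_pow_eq hm ha0)
    refine ⟨And.right, fun hb => ⟨⟨(mem_rootSet_comp_X_pow hm0).mpr (hb ▸ hroot), ?_⟩, hb⟩⟩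
    obtain rfl : b ^ m = a := hb
    exact orderOf_eq_mul_orderOf_pow hm0 hprime

theorem ncard_rootsOfOrder_comp_X_pow_of_coprime [IsSepClosed L] (f : K[X]) {m t d : ℕ}
    (hm : (m : L) ≠ 0) (ht : 0 < t) (hmt : m.Coprime t) (hd : d ∣ m) :
    (rootsOfOrder (f.comp (X ^ m)) L (d * t)).ncard = (rootsOfOrder f L t).ncard * d.totient := by
  have hm0 : m ≠ 0 := fun h => hm (by simp [h])
  refine ncard_eq_ncard_mul_of_ncard_fiber_eq (f := (· ^ m)) (fun b hb => ?_) fun a ha => ?_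
  · exact ⟨(mem_rootSet_comp_X_pow hm0).mp hb.1,
      orderOf_pow_eq_of_coprime_of_orderOf_eq_mul hm0 hmt hd hb.2⟩
  · obtain ⟨hroot, rfl⟩ := ha
    refine Eq.trans (congrArg Set.ncard (Set.ext fun b => ?_))
      (ncard_setOf_pow_eq_and_orderOf_eq hm ht hmt hd)
    exact ⟨fun hb => ⟨hb.2, hb.1.2⟩, fun hb =>
      ⟨⟨(mem_rootSet_comp_X_pow hm0).mpr (hb.1.symm ▸ hroot), hb.2⟩, hb.1⟩⟩

theorem ncard_rootsOfOrder_comp_X_pow_mul [IsSepClosed L] (f : K[X]) {m₁ m₂ t d : ℕ}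
    (hm : ((m₁ * m₂ : ℕ) : L) ≠ 0) (ht : 0 < t) (hm₁ : m₁.Coprime t)
    (hm₂ : ∀ r : ℕ, r.Prime → r ∣ m₂ → r ∣ t) (hd : d ∣ m₁) :
    (rootsOfOrder (f.comp (X ^ (m₁ * m₂))) L (d * m₂ * t)).ncard =
      (rootsOfOrder f L t).ncard * d.totient * m₂ := by
  rw [Nat.cast_mul] at hm
  have hm₁0 : m₁ ≠ 0 := fun h => hm (by simp [h])
  have hdt : 0 < d * t := Nat.mul_pos (Nat.pos_of_dvd_of_pos hd (Nat.pos_of_ne_zero hm₁0)) ht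
  have hcomp : f.comp (X ^ (m₁ * m₂)) = (f.comp (X ^ m₁)).comp (X ^ m₂) := by
    rw [comp_assoc, X_pow_comp, ← pow_mul, mul_comm m₂]
  rw [hcomp, mul_comm d m₂, mul_assoc m₂,
    ncard_rootsOfOrder_comp_X_pow_of_prime_dvd _ (right_ne_zero_of_mul hm) hdt
      fun r hr hrm => (hm₂ r hr hrm).mul_left d,
    ncard_rootsOfOrder_comp_X_pow_of_coprime f (left_ne_zero_of_mul hm) ht hm₁ hd]

theorem orderOf_eq_of_irreducible_of_aeval_eq_zero {h : K[X]} (hirr : Irreducible h) {b c : L}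
    (hb : aeval b h = 0) (hc : aeval c h = 0) : orderOf b = orderOf c := by
  refine orderOf_eq_orderOf_iff.mpr fun k => ?_
  have hdvd : aeval b (X ^ k - 1 : K[X]) = 0 ↔ aeval c (X ^ k - 1 : K[X]) = 0 := by
    rw [hirr.dvd_iff_aeval_eq_zero hb, hirr.dvd_iff_aeval_eq_zero hc]
  simpa [sub_eq_zero] using hdvd

theorem minpoly_mem_irreducibleFactorsOfOrder {g : K[X]} {s : ℕ} {b : L}
    (hb : b ∈ rootsOfOrder g L s) : minpoly K b ∈ irreducibleFactorsOfOrder g L s := by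
  obtain ⟨hroot, rfl⟩ := hb
  obtain ⟨hg, hgb⟩ := mem_rootSet.mp hroot
  have hint : IsIntegral K b := isAlgebraic_iff_isIntegral.mp ⟨g, hg, hgb⟩
  exact ⟨minpoly.monic hint, minpoly.irreducible hint, minpoly.dvd K b hgb, fun c hc =>
    orderOf_eq_of_irreducible_of_aeval_eq_zero (minpoly.irreducible hint) hc (minpoly.aeval K b)⟩

theorem setOf_mem_rootsOfOrder_minpoly_eq {g h : K[X]} (hg : g ≠ 0) {s : ℕ}
    (hh : h ∈ irreducibleFactorsOfOrder g L s) :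
    {b ∈ rootsOfOrder g L s | minpoly K b = h} = h.rootSet L := by
  obtain ⟨hmonic, hirr, hdvd, hord⟩ := hh
  ext b
  rw [mem_rootSet_of_ne hirr.ne_zero]
  refine ⟨fun hb => hb.2 ▸ minpoly.aeval K b, fun hb => ⟨⟨?_, hord b hb⟩, ?_⟩⟩
  · exact (mem_rootSet_of_ne hg).mpr (aeval_eq_zero_of_dvd_aeval_eq_zero hdvd hb)
  · exact (minpoly.eq_of_irreducible_of_monic hirr hb hmonic).symm

end RootsOfOrder

section FiniteField

variable {K : Type*} [Field K] [Fintype K] {L : Type*} [Field L] [Algebra K L]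

theorem natCast_ne_zero_of_coprime_card (L : Type*) [Field L] [Algebra K L] {m : ℕ}
    (hm : m.Coprime (Fintype.card K)) : (m : L) ≠ 0 := by
  have hcard : ((Fintype.card K : ℕ) : L) = 0 := by
    rw [← map_natCast (algebraMap K L), FiniteField.cast_card_eq_zero, map_zero]
  have hcop : IsCoprime (m : L) (Fintype.card K : L) := hm.cast
  rw [hcard, isCoprime_zero_right] at hcop
  exact hcop.ne_zero

theorem natDegree_eq_orderOf_card_of_aeval_eq_zero {h : K[X]} (hirr : Irreducible h) {b : L}
    (hb : aeval b h = 0) (hs : 0 < orderOf b) :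
    h.natDegree = orderOf (Fintype.card K : ZMod (orderOf b)) := by
  obtain ⟨p, hp, n, hp', hcard⟩ := FiniteField.card' K
  have := Fact.mk hp'
  have : NeZero (orderOf b) := ⟨hs.ne'⟩
  have hsL : NeZero ((orderOf b : ℕ) : L) := (IsPrimitiveRoot.orderOf b).neZero'
  have hsK : (orderOf b : K) ≠ 0 := fun h0 => hsL.out (by simpa using congrArg (algebraMap K L) h0)
  have hcop : p.Coprime (orderOf b) := by
    rwa [hp'.coprime_iff_not_dvd, ← CharP.cast_eq_zero_iff K p]
  have hdvd : h ∣ cyclotomic (orderOf b) K := by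
    rw [← hirr.dvd_iff_aeval_eq_zero hb, aeval_def, ← eval_map, map_cyclotomic]
    exact isRoot_cyclotomic_iff.mpr (IsPrimitiveRoot.orderOf b)
  rw [natDegree_of_dvd_cyclotomic_of_irreducible hcard hcop hdvd hirr, ← orderOf_units]
  simp [hcard]

theorem natDegree_eq_orderOf_card_of_forall_aeval_eq_zero [IsSepClosed L] {h : K[X]} {s : ℕ}
    (hs : 0 < s) (hirr : Irreducible h) (hord : ∀ b : L, aeval b h = 0 → orderOf b = s) :
    h.natDegree = orderOf (Fintype.card K : ZMod s) := by
  obtain ⟨b, hb⟩ := IsSepClosed.exists_aeval_eq_zero L h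
    (degree_pos_of_irreducible hirr).ne' (PerfectField.separable_of_irreducible hirr)
  obtain rfl := hord b hb
  exact natDegree_eq_orderOf_card_of_aeval_eq_zero hirr hb hs

theorem ncard_rootsOfOrder_eq_ncard_irreducibleFactorsOfOrder_mul [IsSepClosed L] {g : K[X]}
    (hg : g ≠ 0) {s : ℕ} (hs : 0 < s) :
    (rootsOfOrder g L s).ncard =
      (irreducibleFactorsOfOrder g L s).ncard * orderOf (Fintype.card K : ZMod s) := by
  refine ncard_eq_ncard_mul_of_ncard_fiber_eq (f := minpoly K)
    (fun b hb => minpoly_mem_irreducibleFactorsOfOrder hb) fun h hh => ?_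
  rw [setOf_mem_rootsOfOrder_minpoly_eq hg hh,
    ncard_rootSet_eq_natDegree (PerfectField.separable_of_irreducible hh.2.1),
    natDegree_eq_orderOf_card_of_forall_aeval_eq_zero hs hh.2.1 hh.2.2.2]

theorem ncard_irreducibleFactorsOfOrder_comp_X_pow_mul [IsSepClosed L] {f : K[X]}
    (hf : f.Separable) {m₁ m₂ t d : ℕ} (ht0 : 0 < t)
    (ht : ∀ α : L, aeval α f = 0 → orderOf α = t)
    (hcop : (m₁ * m₂).Coprime (Fintype.card K)) (hm₁ : m₁.Coprime t)
    (hm₂ : ∀ r : ℕ, r.Prime → r ∣ m₂ → r ∣ t) (hd : d ∣ m₁) :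
    (irreducibleFactorsOfOrder (f.comp (X ^ (m₁ * m₂))) L (d * m₂ * t)).ncard *
      orderOf (Fintype.card K : ZMod (d * m₂ * t)) = f.natDegree * m₂ * d.totient := by
  have hm : ((m₁ * m₂ : ℕ) : L) ≠ 0 := natCast_ne_zero_of_coprime_card L hcop
  have hm0 : m₁ * m₂ ≠ 0 := fun h => hm (by simp [h])
  have hs : 0 < d * m₂ * t := Nat.mul_pos (Nat.pos_of_dvd_of_pos (Nat.mul_dvd_mul_right hd m₂)
    (Nat.pos_of_ne_zero hm0)) ht0
  have hcomp : f.comp (X ^ (m₁ * m₂)) ≠ 0 := (comp_X_pow_eq_zero_iff hm0).not.mpr hf.ne_zero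
  have hroots : rootsOfOrder f L t = f.rootSet L :=
    Set.sep_eq_self_iff_mem_true.mpr fun α hα => ht α (aeval_eq_zero_of_mem_rootSet hα)
  rw [← ncard_rootsOfOrder_eq_ncard_irreducibleFactorsOfOrder_mul hcomp hs,
    ncard_rootsOfOrder_comp_X_pow_mul f hm ht0 hm₁ hm₂ hd, hroots, ncard_rootSet_eq_natDegree hf]
  ring

end FiniteField

theorem statement11_general {K L : Type*} [Field K] [Fintype K] [Field L] [IsSepClosed L]
    [Algebra K L] {f : K[X]} (hf : f.Separable) (hdeg : f.natDegree ≠ 0) {t : ℕ} (ht0 : 0 < t)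
    (ht : ∀ α : L, aeval α f = 0 → orderOf α = t) {m₁ m₂ : ℕ}
    (hcop : (m₁ * m₂).Coprime (Fintype.card K)) (hm₁ : m₁.Coprime t)
    (hm₂ : ∀ r : ℕ, r.Prime → r ∣ m₂ → r ∣ t) :
    (∀ β : L, aeval β (f.comp (X ^ (m₁ * m₂))) = 0 → ∃ d : ℕ, d ∣ m₁ ∧ orderOf β = d * m₂ * t) ∧
    ∀ d : ℕ, d ∣ m₁ →
      (Nat.card (irreducibleFactorsOfOrder (f.comp (X ^ (m₁ * m₂))) L (d * m₂ * t)) : ℚ) =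
        f.natDegree * m₂ * d.totient / orderOf (Fintype.card K : ZMod (d * m₂ * t)) ∧
      ∀ h : K[X], Irreducible h → h ∣ f.comp (X ^ (m₁ * m₂)) →
        (∀ β : L, aeval β h = 0 → orderOf β = d * m₂ * t) →
        h.natDegree = orderOf (Fintype.card K : ZMod (d * m₂ * t)) := by
  have hm0 : m₁ * m₂ ≠ 0 := fun h => natCast_ne_zero_of_coprime_card K hcop (by simp [h])
  refine ⟨fun β hβ => exists_dvd_orderOf_eq_of_orderOf_pow_mul hm0
    (ht _ (by simpa [aeval_comp] using hβ)) hm₂, fun d hd => ?_⟩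
  have hdm₂ : 0 < d * m₂ :=
    Nat.pos_of_dvd_of_pos (Nat.mul_dvd_mul_right hd m₂) (Nat.pos_of_ne_zero hm0)
  refine ⟨?_, fun h hirr _ => natDegree_eq_orderOf_card_of_forall_aeval_eq_zero
    (Nat.mul_pos hdm₂ ht0) hirr⟩
  have hcount := ncard_irreducibleFactorsOfOrder_comp_X_pow_mul hf ht0 ht hcop hm₁ hm₂ hd
  have hne : f.natDegree * m₂ * d.totient ≠ 0 := mul_ne_zero
    (mul_ne_zero hdeg (Nat.pos_of_mul_pos_left hdm₂).ne')
    (Nat.totient_pos.mpr (Nat.pos_of_mul_pos_right hdm₂)).ne'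
  rw [← hcount] at hne
  rw [Nat.card_coe_set_eq, eq_div_iff (Nat.cast_ne_zero.mpr (right_ne_zero_of_mul hne))]
  exact_mod_cast hcount

/-- Factorization of `f(x^m)` over the finite field `K` with `q` elements. Roots are taken in an
algebraic closure, irreducible factors are counted up to scalars (as monic polynomials), and the
least natural number `k ≥ 1` with `q ^ k ≡ 1 (mod s)` is `orderOf (q : ZMod s)`. The hypothesis
`0 < t` says that the roots of `f` are nonzero, i.e. have a multiplicative order at all
(`orderOf 0 = 0`). -/
theorem statement11 {K : Type*} [Field K] [Fintype K] (q : ℕ) (hK : Fintype.card K = q)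
    (f : K[X]) (n : ℕ) (hirr : Irreducible f) (hdeg : f.natDegree = n)
    (t : ℕ) (ht0 : 0 < t)
    (ht : ∀ α : AlgebraicClosure K, Polynomial.aeval α f = 0 → orderOf α = t)
    (m m₁ m₂ : ℕ) (hcop : Nat.gcd m q = 1) (hmm : m = m₁ * m₂)
    (hm₁t : Nat.gcd m₁ t = 1) (hm₂t : ∀ r : ℕ, r.Prime → r ∣ m₂ → r ∣ t) :
    (∀ β : AlgebraicClosure K, Polynomial.aeval β (f.comp (X ^ m)) = 0 →
      ∃ d : ℕ, d ∣ m₁ ∧ orderOf β = d * m₂ * t) ∧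
    ∀ d : ℕ, d ∣ m₁ →
      (Nat.card {h : K[X] // h.Monic ∧ Irreducible h ∧ h ∣ f.comp (X ^ m) ∧
          ∀ β : AlgebraicClosure K, Polynomial.aeval β h = 0 → orderOf β = d * m₂ * t} : ℚ)
        = ((n : ℚ) * (m₂ : ℚ) * (Nat.totient d : ℚ)) /
            (orderOf (q : ZMod (d * m₂ * t)) : ℚ) ∧
      ∀ h : K[X], Irreducible h → h ∣ f.comp (X ^ m) →
        (∀ β : AlgebraicClosure K, Polynomial.aeval β h = 0 → orderOf β = d * m₂ * t) →
        h.natDegree = orderOf (q : ZMod (d * m₂ * t)) := by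
  subst hK hdeg hmm
  exact statement11_general (PerfectField.separable_of_irreducible hirr) hirr.natDegree_pos.ne'
    ht0 ht hcop hm₁t hm₂t
end
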